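/- Let l > 0, 0 ≤ α ≤ 1, and ρ₁, ρ₂ ≥ 0. Let u, v : ℝ × [0, ∞) → ℝ be smooth functions, 2l-periodic in x, such that u solves the nonlocal Kuramoto–Sivashinsky equation u_t + u_{xxxx} + u_{xx} + u u_x + α H(u_{xxx}) = 0 and v solves the Kuramoto–Sivashinsky equation v_t + v_{xxxx} + v_{xx} + v v_x = 0, where H is the periodic Hilbert transform acting in x, and u(·, 0) = v(·, 0). Suppose that for all t ≥ 0, ‖u_x(·,t)‖ ≤ ρ₁, ‖v_x(·,t)‖ ≤ ρ₁, ‖u_{xx}(·,t)‖ ≤ ρ₂, ‖v_{xx}(·,t)‖ ≤ ρ₂, and ‖w_x(·,t)‖ ≤ ρ₁ where w := u - v. Then with b₁ := 2 + 4 ρ₁^{1/2} ρ₂^{1/2} and b₂ := 2 ρ₁², for all t ≥ 0: ‖w(·,t)‖² ≤ (b₂ / b₁)(e^{b₁ t} - 1) α². In particular, for each fixed t ≥ 0, ‖u(·,t) - v(·,t)‖ → 0 as α → 0: the solution trajectory of the nonlocal Kuramoto–Sivashinsky equation converges in L² to the trajectory of the usual Kuramoto–Sivashinsky equation starting from the same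 initial data. -/

import Mathlib

/-- `Hf` is the periodic Hilbert transform of the `2l`-periodic function `f`: the `k`-th
Fourier coefficient of `Hf` on `(-l, l)` (w.r.t. the basis `e^{i k π x / l}`) equals
`i·sgn(k)` times that of `f`, where `sgn(0) = 0`. -/
def IsPeriodicHilbertPair (l : ℝ) (hl : 0 < l) (f Hf : ℝ → ℝ) : Prop :=
  ∀ k : ℤ, fourierCoeffOn (show (-l : ℝ) < l by linarith) (fun x => (Hf x : ℂ)) k
    = Complex.I * (Int.sign k : ℂ) *
        fourierCoeffOn (show (-l : ℝ) < l by linarith) (fun x => (f x : ℂ)) k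

open MeasureTheory in
lemma aux_memLp {E : Type*} [NormedAddCommGroup E] [SecondCountableTopology E]
    (l : ℝ) (p : ENNReal) (f : ℝ → E) (hf : Continuous f) :
    MemLp f p (volume.restrict (Set.Ioc (-l) l)) := by
  obtain ⟨C, hC⟩ := (isCompact_Icc (a := -l) (b := l)).exists_bound_of_continuousOn hf.continuousOn
  refine MemLp.of_bound hf.aestronglyMeasurable C ?_
  filter_upwards [ae_restrict_mem measurableSet_Ioc] with x hx
  exact hC x (Set.Ioc_subset_Icc_self hx)

open MeasureTheory in
lemma aux_parseval (l : ℝ) (hl : (-l) < l) (f : ℝ → ℝ) (hf : Continuous f) :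
    HasSum (fun k => ‖fourierCoeffOn hl (fun x => (f x : ℂ)) k‖ ^ 2)
      ((l - -l)⁻¹ * ∫ x in (-l)..l, f x ^ 2) := by
  have hm : MemLp (fun x => (f x : ℂ)) 2 (volume.restrict (Set.Ioc (-l) l)) :=
    aux_memLp l 2 _ (by fun_prop)
  have := hasSum_sq_fourierCoeffOn hl hm
  simpa using this

lemma aux_coeff_lin (l c : ℝ) (hl : (-l) < l) (f g : ℝ → ℝ) (hf : Continuous f) (hg : Continuous g)
    (k : ℤ) :
    fourierCoeffOn hl (fun x => ((f x + c * g x : ℝ) : ℂ)) k =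
      fourierCoeffOn hl (fun x => (f x : ℂ)) k + c * fourierCoeffOn hl (fun x => (g x : ℂ)) k := by
  simp only [fourierCoeffOn_eq_integral]
  have hF : Continuous (fun x : ℝ => fourier (-k) (x : AddCircle (l - -l))) :=
    (map_continuous (fourier (-k))).comp (AddCircle.continuous_mk' _)
  have e : ∀ x : ℝ, fourier (-k) (x : AddCircle (l - -l)) • ((f x + c * g x : ℝ) : ℂ)
     = fourier (-k) (x : AddCircle (l - -l)) • (f x : ℂ) +
       (c : ℂ) * (fourier (-k) (x : AddCircle (l - -l)) • (g x : ℂ)) := by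
    intro x; simp only [smul_eq_mul]; push_cast; ring
  simp_rw [e]
  rw [intervalIntegral.integral_add, intervalIntegral.integral_const_mul]
  · simp only [Complex.real_smul]; ring
  · apply Continuous.intervalIntegrable; fun_prop
  · apply Continuous.intervalIntegrable; fun_prop

lemma aux_coeff_deriv (l : ℝ) (h0 : 0 < l) (hl : (-l) < l) (f f' : ℝ → ℝ)
    (hf : ∀ x, HasDerivAt f (f' x) x)
    (hf' : Continuous f') (hp : f l = f (-l)) (k : ℤ) (hk : k ≠ 0) :
    ‖fourierCoeffOn hl (fun x => (f' x : ℂ)) k‖ =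
      (Real.pi * |(k : ℝ)| / l) * ‖fourierCoeffOn hl (fun x => (f x : ℂ)) k‖ := by
  have := fourierCoeffOn_of_hasDerivAt hl (f := fun x => (f x : ℂ)) (f' := fun x => (f' x : ℂ)) hk
    (fun x _ => (hf x).ofReal_comp) (by apply Continuous.intervalIntegrable; fun_prop)
  rw [this, hp]
  have e : ((l : ℂ) - ((-l : ℝ) : ℂ)) = ((2 * l : ℝ) : ℂ) := by push_cast; ring
  have hk' : |(k : ℝ)| ≠ 0 := by simpa using hk
  simp only [sub_self, mul_zero, zero_sub, e, norm_mul, norm_neg, norm_div, norm_one, Complex.norm_I,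
    Complex.norm_real, Complex.norm_intCast, Complex.norm_ofNat, Real.norm_eq_abs,
    abs_of_pos Real.pi_pos, abs_of_pos h0]
  norm_num
  field_simp

lemma aux_hilbert (l α : ℝ) (h0 : 0 < l) (hl : (-l) < l) (hα : 0 ≤ α) (w H w2 u1 : ℝ → ℝ)
    (hw : Continuous w) (hH : Continuous H) (hw2 : Continuous w2) (hu1 : Continuous u1)
    (h : ∀ k, ‖fourierCoeffOn hl (fun x => (w x : ℂ)) k‖ * ‖fourierCoeffOn hl (fun x => (H x : ℂ)) k‖
      ≤ ‖fourierCoeffOn hl (fun x => (w2 x : ℂ)) k‖ * ‖fourierCoeffOn hl (fun x => (u1 x : ℂ)) k‖) :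
    -(2 * α) * (∫ x in (-l)..l, w x * H x) ≤
      (1 / 2) * (∫ x in (-l)..l, w2 x ^ 2) + 2 * α ^ 2 * ∫ x in (-l)..l, u1 x ^ 2 := by
  have h1 := aux_parseval l hl (fun x => w x + (-α) * H x) (by fun_prop)
  have h2 := aux_parseval l hl (fun x => w x + α * H x) (by fun_prop)
  have h3 := aux_parseval l hl w2 hw2
  have h4 := (aux_parseval l hl u1 hu1).mul_left (4 * α ^ 2)
  have key := hasSum_le (fun k => ?_) (h1.sub h2) (h3.add h4)
  · have e : (∫ x in (-l)..l, (w x + (-α) * H x) ^ 2) - (∫ x in (-l)..l, (w x + α * H x) ^ 2)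
        = -(4 * α) * ∫ x in (-l)..l, w x * H x := by
      rw [← intervalIntegral.integral_sub, ← intervalIntegral.integral_const_mul]
      · congr 1; ext x; ring
      · apply Continuous.intervalIntegrable; fun_prop
      · apply Continuous.intervalIntegrable; fun_prop
    rw [← mul_sub, e] at key
    have hpos : 0 < (l - -l)⁻¹ := by apply inv_pos.2; linarith
    have key' : (l - -l)⁻¹ * (-(4 * α) * ∫ x in (-l)..l, w x * H x) ≤
      (l - -l)⁻¹ * ((∫ x in (-l)..l, w2 x ^ 2) + 4 * α ^ 2 * ∫ x in (-l)..l, u1 x ^ 2) := by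
      linarith
    have := le_of_mul_le_mul_left key' hpos
    linarith
  · simp only [aux_coeff_lin l _ hl w H hw hH k]
    set a := fourierCoeffOn hl (fun x => (w x : ℂ)) k
    set b := fourierCoeffOn hl (fun x => (H x : ℂ)) k
    have hk := h k
    set p := ‖fourierCoeffOn hl (fun x => (w2 x : ℂ)) k‖
    set q := ‖fourierCoeffOn hl (fun x => (u1 x : ℂ)) k‖
    have n1 : ‖a + ((-α : ℝ) : ℂ) * b‖ ≤ ‖a‖ + α * ‖b‖ := by
      refine (norm_add_le _ _).trans ?_
      simp [abs_of_nonneg hα]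
    have n2 : (‖a‖ - α * ‖b‖) ^ 2 ≤ ‖a + (α : ℂ) * b‖ ^ 2 := by
      have := abs_norm_sub_norm_le a (-((α : ℂ) * b))
      simp only [norm_neg, norm_mul, Complex.norm_real, Real.norm_eq_abs, abs_of_nonneg hα,
        sub_neg_eq_add] at this
      exact sq_le_sq' (by linarith [abs_le.1 this]) (abs_le.1 this).2
    have n3 : ‖a + ((-α : ℝ) : ℂ) * b‖ ^ 2 ≤ (‖a‖ + α * ‖b‖) ^ 2 := by gcongr
    nlinarith [mul_le_mul_of_nonneg_left hk hα, sq_nonneg (p - 2 * α * q)]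

lemma aux_ibp (l : ℝ) (f f' g g' : ℝ → ℝ) (hf : ∀ x, HasDerivAt f (f' x) x)
    (hg : ∀ x, HasDerivAt g (g' x) x) (cf : Continuous f') (cg : Continuous g')
    (pf : f l = f (-l)) (pg : g l = g (-l)) :
    ∫ x in (-l)..l, f x * g' x = - ∫ x in (-l)..l, f' x * g x := by
  rw [intervalIntegral.integral_mul_deriv_eq_deriv_mul (fun x _ => hf x) (fun x _ => hg x)
    (cf.intervalIntegrable _ _) (cg.intervalIntegrable _ _), pf, pg]
  ring

open MeasureTheory in
lemma aux_cs (l : ℝ) (h0 : 0 < l) (f g : ℝ → ℝ) (hf : Continuous f) (hg : Continuous g) :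
    ∫ x in (-l)..l, |f x| * |g x| ≤
      Real.sqrt (∫ x in (-l)..l, f x ^ 2) * Real.sqrt (∫ x in (-l)..l, g x ^ 2) := by
  have hm : ∀ f : ℝ → ℝ, Continuous f →
      MemLp f (ENNReal.ofReal 2) (volume.restrict (Set.Ioc (-l) l)) :=
    fun f hf => aux_memLp l _ f hf
  have := integral_mul_norm_le_Lp_mul_Lq Real.HolderConjugate.two_two (hm f hf) (hm g hg)
  simp only [intervalIntegral.integral_of_le (show -l ≤ l by linarith), Real.sqrt_eq_rpow]
  simpa using this

/-- Agmon -/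
lemma aux_agmon (l : ℝ) (h0 : 0 < l) (f f1 f2 : ℝ → ℝ) (hf : ∀ x, HasDerivAt f (f1 x) x)
    (hf1 : ∀ x, HasDerivAt f1 (f2 x) x) (cf : Continuous f2) (pf : f l = f (-l))
    (ρ₁ ρ₂ : ℝ) (b1 : Real.sqrt (∫ x in (-l)..l, f1 x ^ 2) ≤ ρ₁)
    (b2 : Real.sqrt (∫ x in (-l)..l, f2 x ^ 2) ≤ ρ₂) (x : ℝ) (hx : x ∈ Set.Icc (-l) l) :
    |f1 x| ≤ 2 * Real.sqrt ρ₁ * Real.sqrt ρ₂ := by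
  have hl : -l < l := by linarith
  have r1 : 0 ≤ ρ₁ := (Real.sqrt_nonneg _).trans b1
  have r2 : 0 ≤ ρ₂ := (Real.sqrt_nonneg _).trans b2
  have c1 : Continuous f1 := continuous_iff_continuousAt.2 fun x => (hf1 x).continuousAt
  obtain ⟨c, hc, hc0⟩ := exists_hasDerivAt_eq_zero hl
    (fun x _ => (hf x).continuousAt.continuousWithinAt) pf.symm (fun x _ => hf x)
  have i1 : ∫ y in c..x, 2 * (f1 y * f2 y) = f1 x ^ 2 := by
    rw [intervalIntegral.integral_eq_sub_of_hasDerivAt (f := fun y => f1 y ^ 2)]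
    · simp [hc0]
    · intro y _
      have := (hf1 y).pow 2
      exact this.congr_deriv (by push_cast; ring)
    · apply Continuous.intervalIntegrable; fun_prop
  have i2 : |∫ y in c..x, 2 * (f1 y * f2 y)| ≤ ∫ y in (-l)..l, 2 * (|f1 y| * |f2 y|) := by
    have e : ∀ y, 2 * (|f1 y| * |f2 y|) = ‖2 * (f1 y * f2 y)‖ := by
      intro y; simp
    simp_rw [e]
    rw [← Real.norm_eq_abs]
    refine (intervalIntegral.norm_integral_le_integral_norm_uIoc).trans ?_
    rw [intervalIntegral.integral_of_le hl.le]
    apply MeasureTheory.setIntegral_mono_set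
    · apply Continuous.integrableOn_Ioc; fun_prop
    · exact Filter.Eventually.of_forall fun y => norm_nonneg _
    · apply HasSubset.Subset.eventuallyLE
      intro y hy
      rw [Set.mem_uIoc] at hy
      rcases hy with hy | hy
      · exact ⟨hc.1.trans hy.1, hy.2.trans hx.2⟩
      · exact ⟨hx.1.trans_lt hy.1, hy.2.trans hc.2.le⟩
  rw [i1, intervalIntegral.integral_const_mul] at i2
  have i3 := aux_cs l h0 f1 f2 c1 cf
  have i4 : Real.sqrt (∫ x in (-l)..l, f1 x ^ 2) * Real.sqrt (∫ x in (-l)..l, f2 x ^ 2) ≤ ρ₁ * ρ₂ := by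
    gcongr
  apply abs_le_of_sq_le_sq _ (by positivity)
  rw [mul_pow, mul_pow, Real.sq_sqrt r1, Real.sq_sqrt r2]
  have := le_abs_self (f1 x ^ 2)
  nlinarith [mul_nonneg r1 r2]

lemma aux_energy (l α ρ₁ ρ₂ : ℝ) (hl : 0 < l) (hα0 : 0 ≤ α)
    (U V : ℕ → ℝ → ℝ) (Ut Vt H : ℝ → ℝ)
    (hU : ∀ n x, HasDerivAt (U n) (U (n + 1) x) x) (hV : ∀ n x, HasDerivAt (V n) (V (n + 1) x) x)
    (pU : ∀ n, U n l = U n (-l)) (pV : ∀ n, V n l = V n (-l))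
    (cUt : Continuous Ut)
    (hH : IsPeriodicHilbertPair l hl (U 3) H)
    (eU : ∀ x, Ut x + U 4 x + U 2 x + U 0 x * U 1 x + α * H x = 0)
    (eV : ∀ x, Vt x + V 4 x + V 2 x + V 0 x * V 1 x = 0)
    (hu1 : Real.sqrt (∫ x in (-l)..l, U 1 x ^ 2) ≤ ρ₁)
    (hv1 : Real.sqrt (∫ x in (-l)..l, V 1 x ^ 2) ≤ ρ₁)
    (hu2 : Real.sqrt (∫ x in (-l)..l, U 2 x ^ 2) ≤ ρ₂)
    (hv2 : Real.sqrt (∫ x in (-l)..l, V 2 x ^ 2) ≤ ρ₂) :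
    ∫ x in (-l)..l, 2 * (U 0 x - V 0 x) * (Ut x - Vt x) ≤
      (2 + 4 * Real.sqrt ρ₁ * Real.sqrt ρ₂) * (∫ x in (-l)..l, (U 0 x - V 0 x) ^ 2)
        + 2 * ρ₁ ^ 2 * α ^ 2 := by
  have hl' : -l < l := by linarith
  have cU : ∀ n, Continuous (U n) := fun n =>
    continuous_iff_continuousAt.2 fun x => (hU n x).continuousAt
  have cV : ∀ n, Continuous (V n) := fun n =>
    continuous_iff_continuousAt.2 fun x => (hV n x).continuousAt
  obtain ⟨W, hWd⟩ : ∃ W : ℕ → ℝ → ℝ, W = fun n x => U n x - V n x := ⟨_, rfl⟩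
  have hW : ∀ n x, HasDerivAt (W n) (W (n + 1) x) x := by
    intro n x; subst hWd; exact (hU n x).sub (hV n x)
  have pW : ∀ n, W n l = W n (-l) := by intro n; subst hWd; simp [pU, pV]
  have cW : ∀ n, Continuous (W n) := fun n =>
    continuous_iff_continuousAt.2 fun x => (hW n x).continuousAt
  have W0 : ∀ x, U 0 x - V 0 x = W 0 x := by intro x; subst hWd; rfl
  simp_rw [W0]
  obtain ⟨P, hP⟩ : ∃ P : ℝ → ℝ, P = fun x => α * H x := ⟨_, rfl⟩
  have cP : Continuous P := by
    have : P = fun x => -(Ut x + U 4 x + U 2 x + U 0 x * U 1 x) := by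
      ext x; rw [hP]; linarith [eU x]
    rw [this]
    have := cU 4; have := cU 2; have := cU 0; have := cU 1
    fun_prop
  have c0 := cW 0
  have c1 := cW 1
  have c2 := cW 2
  have c4 := cW 4
  have cu0 := cU 0
  have cu1 := cU 1
  have cv0 := cV 0
  have cv1 := cV 1
  -- Hilbert term
  have A1 : -2 * (∫ x in (-l)..l, W 0 x * P x) ≤ (1 / 2) * (∫ x in (-l)..l, W 2 x ^ 2)
      + 2 * α ^ 2 * ∫ x in (-l)..l, U 1 x ^ 2 := by
    rcases hα0.eq_or_lt with h | h
    · have : ∀ x, P x = 0 := by intro x; rw [hP, ← h]; simp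
      simp only [this, ← h]
      have : 0 ≤ ∫ x in (-l)..l, W 2 x ^ 2 :=
        intervalIntegral.integral_nonneg hl'.le fun x _ => sq_nonneg _
      simp
      linarith
    · have cH : Continuous H := by
        have : H = fun x => α⁻¹ * P x := by
          ext x; rw [hP]; field_simp
        rw [this]; fun_prop
      have := aux_hilbert l α hl hl' hα0 (W 0) H (W 2) (U 1) c0 cH c2 cu1 ?_
      · have e : ∫ x in (-l)..l, W 0 x * P x = α * ∫ x in (-l)..l, W 0 x * H x := by
          rw [← intervalIntegral.integral_const_mul]
          congr 1; ext x; rw [hP]; ring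
        rw [e]; linarith
      · intro k
        rw [hH k]
        rcases eq_or_ne k 0 with rfl | hk
        · simp; positivity
        have s1 : ‖((Int.sign k : ℤ) : ℂ)‖ = 1 := by
          rcases hk.lt_or_gt with h | h
          · rw [Int.sign_eq_neg_one_of_neg h]; simp
          · rw [Int.sign_eq_one_of_pos h]; simp
        rw [norm_mul, norm_mul, s1, Complex.norm_I,
          aux_coeff_deriv l hl hl' (U 2) (U 3) (hU 2) (cU 3) (pU 2) k hk,
          aux_coeff_deriv l hl hl' (U 1) (U 2) (hU 1) (cU 2) (pU 1) k hk,
          aux_coeff_deriv l hl hl' (W 1) (W 2) (hW 1) (cW 2) (pW 1) k hk,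
          aux_coeff_deriv l hl hl' (W 0) (W 1) (hW 0) (cW 1) (pW 0) k hk]
        apply le_of_eq; ring
  have A1' : ∫ x in (-l)..l, U 1 x ^ 2 ≤ ρ₁ ^ 2 := by
    have r1 : 0 ≤ ρ₁ := (Real.sqrt_nonneg _).trans hu1
    exact (Real.sqrt_le_left r1).1 hu1
  -- fourth order term
  have A2 : ∫ x in (-l)..l, W 0 x * W 4 x = ∫ x in (-l)..l, W 2 x ^ 2 := by
    rw [aux_ibp l (W 0) (W 1) (W 3) (W 4) (hW 0) (hW 3) (cW 1) (cW 4) (pW 0) (pW 3),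
      aux_ibp l (W 1) (W 2) (W 2) (W 3) (hW 1) (hW 2) (cW 2) (cW 3) (pW 1) (pW 2), neg_neg]
    congr 1; ext x; ring
  -- second order term
  have A3 : -2 * (∫ x in (-l)..l, W 0 x * W 2 x) ≤
      (∫ x in (-l)..l, W 2 x ^ 2) + ∫ x in (-l)..l, W 0 x ^ 2 := by
    rw [← intervalIntegral.integral_const_mul, ← intervalIntegral.integral_add]
    · apply intervalIntegral.integral_mono_on hl'.le
      · apply Continuous.intervalIntegrable; fun_prop
      · apply Continuous.intervalIntegrable; fun_prop
      · intro x _; nlinarith [sq_nonneg (W 0 x + W 2 x)]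
    · apply Continuous.intervalIntegrable; fun_prop
    · apply Continuous.intervalIntegrable; fun_prop
  -- nonlinear term
  have A4 : -2 * (∫ x in (-l)..l, W 0 x * (U 0 x * U 1 x - V 0 x * V 1 x)) ≤
      (4 * Real.sqrt ρ₁ * Real.sqrt ρ₂) * ∫ x in (-l)..l, W 0 x ^ 2 := by
    have e1 := aux_ibp l (W 0) (W 1) (fun x => U 0 x ^ 2 - V 0 x ^ 2)
      (fun x => 2 * (U 0 x * U 1 x - V 0 x * V 1 x)) (hW 0)
      (by
        intro x
        have := ((hU 0 x).pow 2).sub ((hV 0 x).pow 2)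
        exact this.congr_deriv (by push_cast; ring)) c1 (by fun_prop) (pW 0) (by simp [pU, pV])
    have e2 := aux_ibp l (fun x => W 0 x ^ 2) (fun x => 2 * (W 0 x * W 1 x))
      (fun x => U 0 x + V 0 x) (fun x => U 1 x + V 1 x)
      (by
        intro x
        have := (hW 0 x).pow 2
        exact this.congr_deriv (by push_cast; ring))
      (fun x => (hU 0 x).add (hV 0 x)) (by fun_prop) (by fun_prop) (by simp [pW]) (by simp [pU, pV])
    have e3 : ∫ x in (-l)..l, 2 * (W 0 x * W 1 x) * (U 0 x + V 0 x) =
        2 * ∫ x in (-l)..l, W 1 x * (U 0 x ^ 2 - V 0 x ^ 2) := by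
      rw [← intervalIntegral.integral_const_mul]
      congr 1; ext x; rw [← W0]; ring
    have e4 : ∫ x in (-l)..l, W 0 x * (2 * (U 0 x * U 1 x - V 0 x * V 1 x)) =
        2 * ∫ x in (-l)..l, W 0 x * (U 0 x * U 1 x - V 0 x * V 1 x) := by
      rw [← intervalIntegral.integral_const_mul]
      congr 1; ext x; ring
    have e5 : -(∫ x in (-l)..l, W 0 x ^ 2 * (U 1 x + V 1 x)) ≤
      (4 * Real.sqrt ρ₁ * Real.sqrt ρ₂) * ∫ x in (-l)..l, W 0 x ^ 2 := by
      rw [← intervalIntegral.integral_const_mul, ← intervalIntegral.integral_neg]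
      apply intervalIntegral.integral_mono_on hl'.le
      · apply Continuous.intervalIntegrable; fun_prop
      · apply Continuous.intervalIntegrable; fun_prop
      · intro x hx
        have b1 := aux_agmon l hl (U 0) (U 1) (U 2) (hU 0) (hU 1) (cU 2) (pU 0) ρ₁ ρ₂ hu1 hu2 x hx
        have b2 := aux_agmon l hl (V 0) (V 1) (V 2) (hV 0) (hV 1) (cV 2) (pV 0) ρ₁ ρ₂ hv1 hv2 x hx
        have b3 : -(U 1 x + V 1 x) ≤ 4 * Real.sqrt ρ₁ * Real.sqrt ρ₂ := by
          linarith [(abs_le.1 b1).1, (abs_le.1 b2).1]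
        nlinarith [mul_le_mul_of_nonneg_left b3 (sq_nonneg (W 0 x))]
    have e6 : 0 ≤ (4 * Real.sqrt ρ₁ * Real.sqrt ρ₂) * ∫ x in (-l)..l, W 0 x ^ 2 := by
      have : 0 ≤ ∫ x in (-l)..l, W 0 x ^ 2 :=
        intervalIntegral.integral_nonneg hl'.le fun x _ => sq_nonneg _
      positivity
    linarith
  have E : ∫ x in (-l)..l, 2 * W 0 x * (Ut x - Vt x) =
      -2 * (∫ x in (-l)..l, W 0 x * W 4 x) + -2 * (∫ x in (-l)..l, W 0 x * W 2 x)
      + -2 * (∫ x in (-l)..l, W 0 x * (U 0 x * U 1 x - V 0 x * V 1 x))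
      + -2 * (∫ x in (-l)..l, W 0 x * P x) := by
    simp only [← intervalIntegral.integral_const_mul]
    rw [← intervalIntegral.integral_add, ← intervalIntegral.integral_add,
      ← intervalIntegral.integral_add]
    · congr 1; ext x
      have h1 : Ut x - Vt x = -(W 4 x) - W 2 x - (U 0 x * U 1 x - V 0 x * V 1 x) - P x := by
        rw [hP, hWd]; linarith [eU x, eV x]
      rw [h1]; ring
    all_goals apply Continuous.intervalIntegrable; fun_prop
  rw [E]
  have p0 : 0 ≤ ∫ x in (-l)..l, W 0 x ^ 2 :=
    intervalIntegral.integral_nonneg hl'.le fun x _ => sq_nonneg _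
  have p2 : 0 ≤ ∫ x in (-l)..l, W 2 x ^ 2 :=
    intervalIntegral.integral_nonneg hl'.le fun x _ => sq_nonneg _
  have p3 := mul_le_mul_of_nonneg_left A1' (show 0 ≤ 2 * α ^ 2 by positivity)
  rw [A2]
  linarith

lemma aux_time (u : ℝ → ℝ → ℝ) (hu : ContDiff ℝ (⊤ : ℕ∞) (Function.uncurry u)) :
    (∀ t x, HasDerivAt (fun s => u s x) (deriv (fun s => u s x) t) t) ∧
    Continuous (fun p : ℝ × ℝ => deriv (fun s => u s p.2) p.1) := by
  have h1 : ∀ t x, HasDerivAt (fun s => u s x) (fderiv ℝ (Function.uncurry u) (t, x) (1, 0)) t := by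
    intro t x
    have h := (hu.differentiable (by simp) (t, x)).hasFDerivAt
    have h2 : HasDerivAt (fun s : ℝ => (s, x)) ((1 : ℝ), (0 : ℝ)) t :=
      (hasDerivAt_id t).prodMk (hasDerivAt_const t x)
    exact h.comp_hasDerivAt t h2
  refine ⟨fun t x => (h1 t x).differentiableAt.hasDerivAt, ?_⟩
  have : (fun p : ℝ × ℝ => deriv (fun s => u s p.2) p.1)
      = fun p => fderiv ℝ (Function.uncurry u) p (1, 0) := by
    ext p; exact (h1 p.1 p.2).deriv
  rw [this]
  exact (hu.continuous_fderiv (by simp)).clm_apply continuous_const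

lemma aux_space (l : ℝ) (u : ℝ → ℝ → ℝ) (hu : ContDiff ℝ (⊤ : ℕ∞) (Function.uncurry u))
    (hup : ∀ t x : ℝ, u t (x + 2 * l) = u t x) (t : ℝ) :
    (∀ n x, HasDerivAt (iteratedDeriv n (u t)) (iteratedDeriv (n + 1) (u t) x) x) ∧
    ∀ n, iteratedDeriv n (u t) l = iteratedDeriv n (u t) (-l) := by
  have h : ContDiff ℝ (⊤ : ℕ∞) (u t) := by
    have : u t = Function.uncurry u ∘ fun x => (t, x) := rfl
    rw [this]
    exact hu.comp (contDiff_const.prodMk contDiff_id)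
  constructor
  · intro n x
    rw [iteratedDeriv_succ]
    apply DifferentiableAt.hasDerivAt
    apply h.differentiable_iteratedDeriv
    exact_mod_cast WithTop.coe_lt_top _
  · intro n
    have := congrFun (iteratedDeriv_comp_add_const n (u t) (2 * l)) (-l)
    simp only [hup] at this
    rw [show -l + 2 * l = l by ring] at this
    exact this.symm

open MeasureTheory in
lemma aux_diff (l : ℝ) (F F' : ℝ → ℝ → ℝ)
    (hF : ∀ t, Continuous (F t)) (hd : ∀ t x, HasDerivAt (fun s => F s x) (F' t x) t)
    (hF' : Continuous (fun p : ℝ × ℝ => F' p.1 p.2)) (t : ℝ) :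
    HasDerivAt (fun s => ∫ x in (-l)..l, F s x) (∫ x in (-l)..l, F' t x) t := by
  obtain ⟨C, hC⟩ := ((isCompact_Icc (a := t - 1) (b := t + 1)).prod
    (isCompact_uIcc (a := -l) (b := l))).exists_bound_of_continuousOn hF'.continuousOn
  refine (intervalIntegral.hasDerivAt_integral_of_dominated_loc_of_deriv_le (bound := fun _ => C)
    (F' := F') (Icc_mem_nhds (show t - 1 < t by linarith) (show t < t + 1 by linarith)) ?_ ?_ ?_ ?_ ?_ ?_).2
  · exact Filter.Eventually.of_forall fun s => (hF s).aestronglyMeasurable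
  · exact (hF t).intervalIntegrable _ _
  · have : Continuous (F' t) := hF'.comp (Continuous.prodMk_right t)
    exact this.aestronglyMeasurable
  · refine Filter.Eventually.of_forall fun x hx s hs => ?_
    exact hC (s, x) ⟨hs, Set.uIoc_subset_uIcc hx⟩
  · exact continuous_const.intervalIntegrable _ _
  · exact Filter.Eventually.of_forall fun x hx s hs => hd s x

/-- **Trajectory convergence** (quantitative form of Theorem 3.1(i)): let `u` solve the
nonlocal Kuramoto–Sivashinsky equation `u_t + u_{xxxx} + u_{xx} + u u_x + α H(u_{xxx}) = 0`
and `v` solve `v_t + v_{xxxx} + v_{xx} + v v_x = 0`, both `2l`-periodic in `x`, with the same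
initial data, under the uniform bounds `‖u_x‖, ‖v_x‖, ‖w_x‖ ≤ ρ₁`, `‖u_{xx}‖, ‖v_{xx}‖ ≤ ρ₂`
where `w := u - v`.  Then with `b₁ := 2 + 4 ρ₁^{1/2} ρ₂^{1/2}` and `b₂ := 2 ρ₁²`, for all
`t ≥ 0`, `‖w(·,t)‖² ≤ (b₂/b₁)(e^{b₁ t} - 1) α²`; in particular, for each fixed `t` this
bound tends to `0` as `α → 0`, so the trajectory of the nonlocal equation converges in `L²`
to that of the usual Kuramoto–Sivashinsky equation. -/
theorem nonlocal_ks_trajectory_convergence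
    (l α ρ₁ ρ₂ : ℝ) (hl : 0 < l) (hα0 : 0 ≤ α) (hα1 : α ≤ 1)
    (hρ₁ : 0 ≤ ρ₁) (hρ₂ : 0 ≤ ρ₂)
    (u v Hu3 : ℝ → ℝ → ℝ)
    (hu : ContDiff ℝ (⊤ : ℕ∞) (Function.uncurry u))
    (hv : ContDiff ℝ (⊤ : ℕ∞) (Function.uncurry v))
    (hup : ∀ t x : ℝ, u t (x + 2 * l) = u t x)
    (hvp : ∀ t x : ℝ, v t (x + 2 * l) = v t x)
    (hHu3p : ∀ t x : ℝ, Hu3 t (x + 2 * l) = Hu3 t x)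
    (hHu3 : ∀ t : ℝ, 0 ≤ t → IsPeriodicHilbertPair l hl (iteratedDeriv 3 (u t)) (Hu3 t))
    (hueq : ∀ t : ℝ, 0 ≤ t → ∀ x : ℝ,
      deriv (fun s => u s x) t + iteratedDeriv 4 (u t) x + iteratedDeriv 2 (u t) x
        + u t x * deriv (u t) x + α * Hu3 t x = 0)
    (hveq : ∀ t : ℝ, 0 ≤ t → ∀ x : ℝ,
      deriv (fun s => v s x) t + iteratedDeriv 4 (v t) x + iteratedDeriv 2 (v t) x
        + v t x * deriv (v t) x = 0)
    (hinit : ∀ x : ℝ, u 0 x = v 0 x)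
    (hu1 : ∀ t : ℝ, 0 ≤ t → Real.sqrt (∫ x in (-l)..l, (deriv (u t) x) ^ 2) ≤ ρ₁)
    (hv1 : ∀ t : ℝ, 0 ≤ t → Real.sqrt (∫ x in (-l)..l, (deriv (v t) x) ^ 2) ≤ ρ₁)
    (hu2 : ∀ t : ℝ, 0 ≤ t → Real.sqrt (∫ x in (-l)..l, (iteratedDeriv 2 (u t) x) ^ 2) ≤ ρ₂)
    (hv2 : ∀ t : ℝ, 0 ≤ t → Real.sqrt (∫ x in (-l)..l, (iteratedDeriv 2 (v t) x) ^ 2) ≤ ρ₂)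
    (hw1 : ∀ t : ℝ, 0 ≤ t →
      Real.sqrt (∫ x in (-l)..l, (deriv (fun y => u t y - v t y) x) ^ 2) ≤ ρ₁) :
    (∀ t : ℝ, 0 ≤ t →
      (∫ x in (-l)..l, (u t x - v t x) ^ 2)
        ≤ ((2 * ρ₁ ^ 2) / (2 + 4 * Real.sqrt ρ₁ * Real.sqrt ρ₂))
            * (Real.exp ((2 + 4 * Real.sqrt ρ₁ * Real.sqrt ρ₂) * t) - 1) * α ^ 2) ∧
    (∀ t : ℝ, Filter.Tendsto
      (fun a : ℝ => ((2 * ρ₁ ^ 2) / (2 + 4 * Real.sqrt ρ₁ * Real.sqrt ρ₂))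
          * (Real.exp ((2 + 4 * Real.sqrt ρ₁ * Real.sqrt ρ₂) * t) - 1) * a ^ 2)
      (nhds 0) (nhds 0)) := by
  constructor
  · intro T hT
    obtain ⟨du, cdu⟩ := aux_time u hu
    obtain ⟨dv, cdv⟩ := aux_time v hv
    have cu : ∀ t, Continuous (u t) := fun t => hu.continuous.comp (Continuous.prodMk_right t)
    have cv : ∀ t, Continuous (v t) := fun t => hv.continuous.comp (Continuous.prodMk_right t)
    have hE := aux_diff l (fun t x => (u t x - v t x) ^ 2)
      (fun t x => 2 * (u t x - v t x) * (deriv (fun s => u s x) t - deriv (fun s => v s x) t))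
      (fun t => ((cu t).sub (cv t)).pow 2)
      (fun t x => by
        have := ((du t x).sub (dv t x)).pow 2
        exact this.congr_deriv (by simp))
      (by
        have h1 : Continuous fun p : ℝ × ℝ => u p.1 p.2 := hu.continuous
        have h2 : Continuous fun p : ℝ × ℝ => v p.1 p.2 := hv.continuous
        fun_prop)
    have hK : (2 + 4 * Real.sqrt ρ₁ * Real.sqrt ρ₂) ≠ 0 := by positivity
    have G := le_gronwallBound_of_liminf_deriv_right_le (δ := 0)
      (K := 2 + 4 * Real.sqrt ρ₁ * Real.sqrt ρ₂) (ε := 2 * ρ₁ ^ 2 * α ^ 2) (a := 0) (b := T)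
      (fun t _ => (hE t).continuousAt.continuousWithinAt)
      (fun t _ r hr => (hE t).hasDerivWithinAt.liminf_right_slope_le hr)
      (by simp [hinit]) ?_ T ⟨hT, le_rfl⟩
    · rw [gronwallBound_of_K_ne_0 hK] at G
      refine G.trans (le_of_eq ?_)
      simp only [sub_zero]
      ring
    · intro t ht
      obtain ⟨su, pu⟩ := aux_space l u hu hup t
      obtain ⟨sv, pv⟩ := aux_space l v hv hvp t
      have := aux_energy l α ρ₁ ρ₂ hl hα0 (fun n => iteratedDeriv n (u t))
        (fun n => iteratedDeriv n (v t)) (fun x => deriv (fun s => u s x) t)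
        (fun x => deriv (fun s => v s x) t) (Hu3 t) su sv pu pv
        (cdu.comp (Continuous.prodMk_right t)) (hHu3 t ht.1)
        (fun x => by simpa [iteratedDeriv_zero, iteratedDeriv_one] using hueq t ht.1 x)
        (fun x => by simpa [iteratedDeriv_zero, iteratedDeriv_one] using hveq t ht.1 x)
        (by simpa only [iteratedDeriv_one] using hu1 t ht.1)
        (by simpa only [iteratedDeriv_one] using hv1 t ht.1) (hu2 t ht.1) (hv2 t ht.1)
      simpa only [iteratedDeriv_zero] using this
  · intro t
    have : Continuous (fun a : ℝ => ((2 * ρ₁ ^ 2) / (2 + 4 * Real.sqrt ρ₁ * Real.sqrt ρ₂))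
          * (Real.exp ((2 + 4 * Real.sqrt ρ₁ * Real.sqrt ρ₂) * t) - 1) * a ^ 2) := by fun_prop
    simpa using this.tendsto 0
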